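/- For all T > 0, ξ ∈ ℝ^d, a ∈ Ω, x ∈ ℤ^d and j = 1,…,d, the oscillation of the j-th component of the gradient of the modified corrector at the origin satisfies osc_{a(x)} (∇_j φ_T(a;0) + ξ_j) ≤ C(d,λ) |∇∇G_T(a;0,x)| |∇φ_T(a;x) + ξ|, with a constant depending only on d and λ, where ∇∇G_T(a;0,x) = ∇_x∇_y G_T(a;x',y)|_{x'=0, y=x} is the mixed second derivative measured in the spectral norm on ℝ^{d×d}. -/

import Mathlib

/-!
Let `b` agree with `a` off the site `x`, let `φ_a`, `φ_b` be the modified correctors and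
`w = φ_b - φ_a`. Subtracting the equations gives
`(1/T) w + ∇*(a∇w) = -∇*(δ_x (b(x) - a(x)) (∇φ_b(x) + ξ))` (`corrector_diff`). The right-hand side
is finitely supported, so a finite combination of the Green's functions `G_a(·, x + e_k)` and
`G_a(·, x)` is an `ℓ²` solution (`green_combination`); it equals `w` because bounded solutions are
unique (`bounded_unique`, a weighted energy argument). Differentiating at the origin,
`|∇_j w(0)| ≤ |∇∇G_a(0,x)| · 2 |∇φ_b(x) + ξ|`.

It remains to replace `φ_b` by `φ_a` on the right. Exchanging the roles of `a` and `b`, `w` also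
solves the equation of `b` with right-hand side `-∇*(δ_x (b(x) - a(x)) (∇φ_a(x) + ξ))`, and since
`w ∈ ℓ²` the energy identity gives `λ |∇w(x)| ≤ 2 |∇φ_a(x) + ξ|` (`energy_bound`). Hence
`|∇φ_b(x) + ξ| ≤ (1 + 2/λ) |∇φ_a(x) + ξ|`, so every value in the oscillation is within
`2 (1 + 2/λ) |∇∇G_a(0,x)| |∇φ_a(x) + ξ|` of the value at `a`, and `C = 4 (1 + 2/λ)` works
(`perturbation_bound`).
-/

open MeasureTheory
open scoped ENNReal

namespace StochHom

noncomputable section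


/-- The lattice `ℤ^d`. -/
abbrev Lat (d : ℕ) := Fin d → ℤ

/-- The `i`-th coordinate unit vector of `ℤ^d`. -/
def unitv (d : ℕ) (i : Fin d) : Lat d := fun j => if j = i then 1 else 0

/-- Euclidean norm of a vector in `ℝ^d`. -/
noncomputable def vnorm {d : ℕ} (v : Fin d → ℝ) : ℝ := Real.sqrt (∑ i, (v i) ^ 2)

/-- Euclidean norm of a lattice point. -/
noncomputable def latnorm {d : ℕ} (x : Lat d) : ℝ := vnorm (fun i => (x i : ℝ))

/-- Discrete gradient `∇u(x) = (u(x+eᵢ) - u(x))ᵢ`. -/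
def dgrad {d : ℕ} (u : Lat d → ℝ) (x : Lat d) : Fin d → ℝ :=
  fun i => u (x + unitv d i) - u x

/-- Discrete negative divergence `∇*g(x) = Σᵢ (gᵢ(x-eᵢ) - gᵢ(x))`. -/
def ddiv {d : ℕ} (g : Lat d → Fin d → ℝ) (x : Lat d) : ℝ :=
  ∑ i, (g (x - unitv d i) i - g x i)

/-- Matrix-vector multiplication for a `d×d` matrix given as `Fin d → Fin d → ℝ`. -/
def mulVec' {d : ℕ} (A : Fin d → Fin d → ℝ) (v : Fin d → ℝ) : Fin d → ℝ :=
  fun i => ∑ j, A i j * v j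

/-- The ellipticity condition defining `Ω₀`: `v·Av ≥ λ|v|²` and `|Av| ≤ |v|`. -/
def IsElliptic (d : ℕ) (lam : ℝ) (A : Fin d → Fin d → ℝ) : Prop :=
  (∀ v : Fin d → ℝ, lam * ∑ i, (v i) ^ 2 ≤ ∑ i, v i * mulVec' A v i) ∧
  (∀ v : Fin d → ℝ, vnorm (mulVec' A v) ≤ vnorm v)

/-- The space `Ω = Ω₀^{ℤ^d}` of admissible coefficient fields. -/
abbrev Coeff (d : ℕ) (lam : ℝ) :=
  {a : Lat d → Fin d → Fin d → ℝ // ∀ x, IsElliptic d lam (a x)}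

/-- Shift of a coefficient field: `(τ_z a)(x) = a(x+z)`. -/
def shift {d : ℕ} {lam : ℝ} (z : Lat d) (a : Coeff d lam) : Coeff d lam :=
  ⟨fun x => a.1 (x + z), fun x => a.2 (x + z)⟩

/-- Stationarity of an ensemble: every shift is measure preserving. -/
def Stationary {d : ℕ} {lam : ℝ} (μ : Measure (Coeff d lam)) : Prop :=
  ∀ z : Lat d, MeasurePreserving (shift z) μ μ

/-- Coefficient fields agreeing with `a` outside of `x`. -/
def sameOutside {d : ℕ} {lam : ℝ} (a : Coeff d lam) (x : Lat d) :
    Set (Coeff d lam) :=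
  {b | ∀ y, y ≠ x → b.1 y = a.1 y}

/-- The oscillation `osc_{a(x)} ζ`. -/
noncomputable def osc {d : ℕ} {lam : ℝ} (ζ : Coeff d lam → ℝ) (a : Coeff d lam)
    (x : Lat d) : ℝ :=
  sSup (ζ '' sameOutside a x) - sInf (ζ '' sameOutside a x)

/-- Membership in `C_b(Ω)`: bounded continuous functions. -/
def MemCb {d : ℕ} {lam : ℝ} (ζ : Coeff d lam → ℝ) : Prop :=
  Continuous ζ ∧ ∃ M, ∀ a, |ζ a| ≤ M

/-- The logarithmic Sobolev inequality with constant `ρ`. -/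
def SatisfiesLSI {d : ℕ} {lam : ℝ} (μ : Measure (Coeff d lam)) (ρ : ℝ) : Prop :=
  ∀ ζ : Coeff d lam → ℝ, MemCb ζ →
    ∫ a, (ζ a) ^ 2 * Real.log ((ζ a) ^ 2 / ∫ b, (ζ b) ^ 2 ∂μ) ∂μ
      ≤ (1 / (2 * ρ)) * ∫ a, ∑' x : Lat d, (osc ζ a x) ^ 2 ∂μ

/-- The spectral gap inequality with constant `ρ`. -/
def SatisfiesSG {d : ℕ} {lam : ℝ} (μ : Measure (Coeff d lam)) (ρ : ℝ) : Prop :=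
  ∀ ζ : Coeff d lam → ℝ, MemCb ζ →
    ∫ a, (ζ a - ∫ b, ζ b ∂μ) ^ 2 ∂μ
      ≤ (1 / ρ) * ∫ a, ∑' x : Lat d, (osc ζ a x) ^ 2 ∂μ

/-- `φ` is a bounded solution of the modified corrector equation
`(1/T)φ + ∇*(a∇φ) = -∇*(aξ)` on `ℤ^d`. -/
def IsModCorrector (d : ℕ) (T : ℝ) (ξ : Fin d → ℝ)
    (a : Lat d → Fin d → Fin d → ℝ) (φ : Lat d → ℝ) : Prop :=
  (∃ M, ∀ x, |φ x| ≤ M) ∧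
  ∀ x, (1 / T) * φ x + ddiv (fun y => mulVec' (a y) (dgrad φ y)) x
      = - ddiv (fun y => mulVec' (a y) ξ) x

/-- `G` is the `ℓ²` Green's function of `(1/T) + ∇*(a∇·)` with pole at `y`. -/
def IsGreen (d : ℕ) (T : ℝ) (a : Lat d → Fin d → Fin d → ℝ) (y : Lat d)
    (G : Lat d → ℝ) : Prop :=
  Summable (fun x => (G x) ^ 2) ∧
  ∀ x, (1 / T) * G x + ddiv (fun z => mulVec' (a z) (dgrad G z)) x
      = if x = y then 1 else 0

/-- Spectral norm (Euclidean operator norm) of a `d×d` matrix. -/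
noncomputable def specNorm {d : ℕ} (A : Fin d → Fin d → ℝ) : ℝ :=
  sSup {r : ℝ | ∃ v : Fin d → ℝ, vnorm v ≤ 1 ∧ r = vnorm (mulVec' A v)}

/-! ### Euclidean and spectral norm -/

lemma vnorm_eq {d : ℕ} (v : Fin d → ℝ) :
    vnorm v = ‖(WithLp.toLp 2 v : EuclideanSpace ℝ (Fin d))‖ := by
  rw [EuclideanSpace.norm_eq]; simp [vnorm]

lemma vnorm_nonneg {d : ℕ} (v : Fin d → ℝ) : 0 ≤ vnorm v := Real.sqrt_nonneg _

lemma vnorm_sq {d : ℕ} (v : Fin d → ℝ) : vnorm v ^ 2 = ∑ i, v i ^ 2 :=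
  Real.sq_sqrt (Finset.sum_nonneg fun i _ => sq_nonneg _)

lemma vnorm_add_le {d : ℕ} (v w : Fin d → ℝ) : vnorm (v + w) ≤ vnorm v + vnorm w := by
  simp only [vnorm_eq, WithLp.toLp_add]; exact norm_add_le _ _

lemma vnorm_sub_le {d : ℕ} (v w : Fin d → ℝ) : vnorm (v - w) ≤ vnorm v + vnorm w := by
  simp only [vnorm_eq, WithLp.toLp_sub]; exact norm_sub_le _ _

lemma vnorm_smul {d : ℕ} (c : ℝ) (v : Fin d → ℝ) : vnorm (c • v) = |c| * vnorm v := by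
  simp only [vnorm_eq, WithLp.toLp_smul, norm_smul, Real.norm_eq_abs]

lemma abs_le_vnorm {d : ℕ} (v : Fin d → ℝ) (i : Fin d) : |v i| ≤ vnorm v := by
  rw [vnorm_eq]; exact PiLp.norm_apply_le (WithLp.toLp 2 v : EuclideanSpace ℝ (Fin d)) i

lemma abs_dot_le {d : ℕ} (v w : Fin d → ℝ) : |∑ i, v i * w i| ≤ vnorm v * vnorm w := by
  apply abs_le_of_sq_le_sq _ (mul_nonneg (vnorm_nonneg _) (vnorm_nonneg _))
  rw [mul_pow, vnorm_sq, vnorm_sq]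
  exact Finset.sum_mul_sq_le_sq_mul_sq _ _ _

lemma mulVec'_smul {d : ℕ} (A : Fin d → Fin d → ℝ) (c : ℝ) (v : Fin d → ℝ) :
    mulVec' A (c • v) = c • mulVec' A v := by
  ext i; simp only [mulVec', Pi.smul_apply, smul_eq_mul, Finset.mul_sum]
  exact Finset.sum_congr rfl fun j _ => by ring

lemma mulVec'_add {d : ℕ} (A : Fin d → Fin d → ℝ) (v w : Fin d → ℝ) :
    mulVec' A (v + w) = mulVec' A v + mulVec' A w := by
  ext i; simp only [mulVec', Pi.add_apply, mul_add, Finset.sum_add_distrib]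

/-- The supremum defining `specNorm` is over a bounded set. -/
lemma specNorm_bddAbove {d : ℕ} (A : Fin d → Fin d → ℝ) :
    BddAbove {r : ℝ | ∃ v : Fin d → ℝ, vnorm v ≤ 1 ∧ r = vnorm (mulVec' A v)} := by
  refine ⟨vnorm (fun i => vnorm (A i)), ?_⟩
  rintro r ⟨v, hv, rfl⟩
  refine Real.sqrt_le_sqrt (Finset.sum_le_sum fun i _ => ?_)
  refine sq_le_sq' ?_ ?_
  all_goals
    have h1 := abs_le.1 (abs_dot_le (A i) v)
    have h2 : vnorm (A i) * vnorm v ≤ vnorm (A i) := mul_le_of_le_one_right (vnorm_nonneg _) hv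
    simp only [mulVec']
    linarith [h1.1, h1.2]

lemma vnorm_mulVec'_le {d : ℕ} (A : Fin d → Fin d → ℝ) (v : Fin d → ℝ) :
    vnorm (mulVec' A v) ≤ specNorm A * vnorm v := by
  rcases eq_or_lt_of_le (vnorm_nonneg v) with h | h
  · have hv : v = 0 := by
      ext i
      have := abs_le_vnorm v i
      rw [← h] at this
      exact abs_nonpos_iff.1 this
    subst hv
    simp [mulVec', vnorm]
  · have h1 : vnorm (mulVec' A ((vnorm v)⁻¹ • v)) ≤ specNorm A := by
      refine le_csSup (specNorm_bddAbove A) ⟨_, ?_, rfl⟩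
      rw [vnorm_smul, abs_of_pos (inv_pos.2 h), inv_mul_cancel₀ h.ne']
    rw [mulVec'_smul, vnorm_smul, abs_of_pos (inv_pos.2 h), inv_mul_le_iff₀ h] at h1
    linarith

lemma specNorm_nonneg {d : ℕ} (A : Fin d → Fin d → ℝ) : 0 ≤ specNorm A :=
  Real.sSup_nonneg (by rintro r ⟨v, _, rfl⟩; exact vnorm_nonneg _)

/-! ### The operator and summation by parts -/

/-- The massive elliptic operator `u ↦ (1/T) u + ∇*(a∇u)`, as a linear map on all lattice
functions. -/
def massiveOp {d : ℕ} (T : ℝ) (a : Lat d → Fin d → Fin d → ℝ) :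
    (Lat d → ℝ) →ₗ[ℝ] (Lat d → ℝ) where
  toFun u x := (1 / T) * u x + ddiv (fun y => mulVec' (a y) (dgrad u y)) x
  map_add' u v := by
    ext x
    have h : ∀ y, dgrad (u + v) y = dgrad u y + dgrad v y := fun y => by
      ext i; simp only [dgrad, Pi.add_apply]; ring
    simp only [h, mulVec'_add, ddiv, Pi.add_apply, mul_add]
    rw [add_add_add_comm, ← Finset.sum_add_distrib]
    congr 1
    exact Finset.sum_congr rfl fun i _ => by ring
  map_smul' c u := by
    ext x
    have h : ∀ y, dgrad (c • u) y = c • dgrad u y := fun y => by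
      ext i; simp only [dgrad, Pi.smul_apply, smul_eq_mul]; ring
    simp only [h, mulVec'_smul, ddiv, Pi.smul_apply, smul_eq_mul, RingHom.id_apply, mul_add,
      Finset.mul_sum]
    congr 1
    · ring
    · exact Finset.sum_congr rfl fun i _ => by ring

lemma massiveOp_apply {d : ℕ} (T : ℝ) (a : Lat d → Fin d → Fin d → ℝ) (u : Lat d → ℝ)
    (x : Lat d) :
    massiveOp T a u x = (1 / T) * u x + ddiv (fun y => mulVec' (a y) (dgrad u y)) x := rfl

lemma summation_by_parts {d : ℕ} (f : Lat d → ℝ) (g : Lat d → Fin d → ℝ)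
    (h1 : ∀ i, Summable fun x => f x * g x i)
    (h2 : ∀ i, Summable fun x => f (x + unitv d i) * g x i) :
    HasSum (fun x => f x * ddiv g x) (∑' x, ∑ i, dgrad f x i * g x i) := by
  have h3 : ∀ i, HasSum (fun x => f x * g (x - unitv d i) i)
      (∑' x, f (x + unitv d i) * g x i) := fun i => by
    have := (Equiv.addRight (unitv d i)).hasSum_iff (f := fun x => f x * g (x - unitv d i) i)
      (a := ∑' x, f (x + unitv d i) * g x i)
    rw [← this]
    convert (h2 i).hasSum using 2 with x
    simp
  have h4 : HasSum (fun x => ∑ i, (f x * g (x - unitv d i) i - f x * g x i))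
      (∑ i, ((∑' x, f (x + unitv d i) * g x i) - ∑' x, f x * g x i)) :=
    hasSum_sum fun i _ => (h3 i).sub (h1 i).hasSum
  have h5 : HasSum (fun x => ∑ i, (f (x + unitv d i) * g x i - f x * g x i))
      (∑ i, ((∑' x, f (x + unitv d i) * g x i) - ∑' x, f x * g x i)) :=
    hasSum_sum fun i _ => (h2 i).hasSum.sub (h1 i).hasSum
  have h6 : (∑' x, ∑ i, dgrad f x i * g x i)
      = ∑ i, ((∑' x, f (x + unitv d i) * g x i) - ∑' x, f x * g x i) := by
    rw [← h5.tsum_eq]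
    exact tsum_congr fun x => Finset.sum_congr rfl fun i _ => by simp only [dgrad]; ring
  rw [h6]
  convert h4 using 2 with x
  simp only [ddiv, Finset.mul_sum, mul_sub]

/-! ### Uniqueness of bounded solutions -/

/-- A summable positive weight on `ℤ^d` that is nearly constant under unit shifts: the product
weight `∏ i, (1 + δ) ^ (-|x i|)`. -/
lemma exists_weight (d : ℕ) (δ : ℝ) (hδ : 0 < δ) :
    ∃ ρ : Lat d → ℝ, (∀ x, 0 < ρ x) ∧ Summable ρ ∧
      ∀ x i, ρ (x + unitv d i) ≤ (1 + δ) * ρ x ∧ ρ x ≤ (1 + δ) * ρ (x + unitv d i) := by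
  set r : ℝ := (1 + δ)⁻¹ with hr
  have hr0 : 0 < r := by positivity
  have hr1 : r < 1 := inv_lt_one_of_one_lt₀ (by linarith)
  have hrδ : (1 + δ) * r = 1 := mul_inv_cancel₀ (by positivity)
  have hsum : Summable fun n : ℤ => r ^ n.natAbs := by
    refine Summable.of_nat_of_neg ?_ ?_ <;>
      simpa using summable_geometric_of_lt_one hr0.le hr1
  have hstep : ∀ m n : ℕ, m ≤ n + 1 → r ^ n ≤ (1 + δ) * r ^ m := fun m n h => by
    have h1 : r ^ (n + 1) ≤ r ^ m := pow_le_pow_of_le_one hr0.le hr1.le h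
    calc r ^ n = (1 + δ) * r ^ (n + 1) := by rw [pow_succ, mul_comm (r ^ n), ← mul_assoc, hrδ, one_mul]
      _ ≤ _ := by gcongr
  refine ⟨fun x => ∏ i, r ^ (x i).natAbs, fun x => by positivity, ?_, fun x i => ?_⟩
  · refine summable_of_sum_le (c := (∑' n : ℤ, r ^ n.natAbs) ^ d) (fun x => by positivity) ?_
    intro s
    classical
    let t : Fin d → Finset ℤ := fun i => s.image fun x => x i
    have hst : s ⊆ Fintype.piFinset t := fun x hx => by
      rw [Fintype.mem_piFinset]
      exact fun i => Finset.mem_image_of_mem _ hx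
    calc ∑ x ∈ s, ∏ i, r ^ (x i).natAbs
        ≤ ∑ x ∈ Fintype.piFinset t, ∏ i, r ^ (x i).natAbs :=
          Finset.sum_le_sum_of_subset_of_nonneg hst fun x _ _ => by positivity
      _ = ∏ i, ∑ n ∈ t i, r ^ n.natAbs := (Finset.prod_univ_sum t fun _ n => r ^ n.natAbs).symm
      _ ≤ ∏ _i : Fin d, ∑' n : ℤ, r ^ n.natAbs :=
          Finset.prod_le_prod (fun i _ => Finset.sum_nonneg fun n _ => by positivity)
            fun i _ => hsum.sum_le_tsum _ fun n _ => by positivity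
      _ = _ := by simp
  · have key : ∀ y : Lat d, ∏ k, r ^ (y k).natAbs
        = r ^ (y i).natAbs * ∏ k ∈ Finset.univ.erase i, r ^ (y k).natAbs := fun y =>
      (Finset.mul_prod_erase _ _ (Finset.mem_univ i)).symm
    have hP : ∏ k ∈ Finset.univ.erase i, r ^ ((x + unitv d i) k).natAbs
        = ∏ k ∈ Finset.univ.erase i, r ^ (x k).natAbs :=
      Finset.prod_congr rfl fun k hk => by simp [unitv, Finset.ne_of_mem_erase hk]
    have hi : (x + unitv d i) i = x i + 1 := by simp [unitv]
    have hQ : 0 ≤ ∏ k ∈ Finset.univ.erase i, r ^ (x k).natAbs := by positivity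
    simp only [key, hP, hi, ← mul_assoc]
    exact ⟨mul_le_mul_of_nonneg_right (hstep _ _ (by omega)) hQ,
      mul_le_mul_of_nonneg_right (hstep _ _ (by omega)) hQ⟩

set_option maxHeartbeats 1000000 in
/-- Bounded solutions of the homogeneous equation vanish. Without symmetry or diagonality of the
coefficients there is no maximum principle; instead the equation is tested with `ρ u` for a slowly
varying summable weight `ρ`. -/
lemma bounded_unique {d : ℕ} {lam T : ℝ} (hlam : 0 < lam) (hT : 0 < T) (a : Coeff d lam)
    (u : Lat d → ℝ) (M : ℝ) (hM : ∀ x, |u x| ≤ M) (hu : massiveOp T a.1 u = 0) : u = 0 := by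
  -- `δ` is small enough for the commutator terms to be absorbed by ellipticity and by the mass.
  obtain ⟨δ, hδ, hδ1, hδl, hδT⟩ : ∃ δ : ℝ, 0 < δ ∧ δ ≤ 1 ∧ δ ≤ lam ∧ d * δ < 1 / T := by
    refine ⟨min (min 1 lam) (1 / (2 * (d + 1) * T)), by positivity,
      (min_le_left _ _).trans (min_le_left _ _), (min_le_left _ _).trans (min_le_right _ _), ?_⟩
    calc (d : ℝ) * min (min 1 lam) (1 / (2 * (d + 1) * T))
        ≤ d * (1 / (2 * (d + 1) * T)) := by gcongr; exact min_le_right _ _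
      _ < 1 / T := by
        rw [mul_one_div, div_lt_div_iff₀ (by positivity) hT]
        nlinarith [(Nat.cast_nonneg d : (0:ℝ) ≤ d), mul_nonneg (Nat.cast_nonneg d : (0:ℝ) ≤ d) hT.le]
  obtain ⟨ρ, hρ, hρs, hρδ⟩ := exists_weight d δ hδ
  have hM0 : 0 ≤ M := (abs_nonneg _).trans (hM 0)
  set g : Lat d → Fin d → ℝ := fun y => mulVec' (a.1 y) (dgrad u y) with hg
  have hgn : ∀ x, ∑ i, g x i ^ 2 ≤ ∑ i, dgrad u x i ^ 2 := fun x => by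
    rw [← vnorm_sq, ← vnorm_sq]
    exact pow_le_pow_left₀ (vnorm_nonneg _) ((a.2 x).2 _) 2
  obtain ⟨K, hK⟩ : ∃ K, ∀ x i, |g x i| ≤ K := by
    refine ⟨Real.sqrt (∑ _i : Fin d, (M + M) ^ 2), fun x i => (abs_le_vnorm _ i).trans
      (((a.2 x).2 _).trans (Real.sqrt_le_sqrt (Finset.sum_le_sum fun k _ => ?_)))⟩
    have h1 := abs_le.1 (hM (x + unitv d k))
    have h2 := abs_le.1 (hM x)
    exact sq_le_sq' (by simp only [dgrad]; linarith) (by simp only [dgrad]; linarith)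
  -- products of a summable weight with bounded functions are summable
  have hsm : ∀ σ v : Lat d → ℝ, Summable σ → (∀ x, 0 ≤ σ x) → (∃ B, ∀ x, |v x| ≤ B) →
      Summable fun x => σ x * v x := by
    rintro σ v hσ hσ0 ⟨B, hB⟩
    refine Summable.of_norm_bounded (hσ.mul_right B) fun x => ?_
    rw [norm_mul, Real.norm_eq_abs, Real.norm_eq_abs, abs_of_nonneg (hσ0 x)]
    exact mul_le_mul_of_nonneg_left (hB x) (hσ0 x)
  have hsh : ∀ (i : Fin d) (σ : Lat d → ℝ), Summable σ → Summable fun x => σ (x + unitv d i) :=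
    fun i σ hσ => (Equiv.addRight (unitv d i)).summable_iff.2 hσ
  have hsq : Summable fun x => ρ x * u x ^ 2 :=
    hsm ρ _ hρs (fun x => (hρ x).le) ⟨M ^ 2, fun x => by
      rw [abs_pow]; exact pow_le_pow_left₀ (abs_nonneg _) (hM x) 2⟩
  have hb : ∀ p q P Q : ℝ, |p| ≤ P → |q| ≤ Q → |p * q| ≤ P * Q := fun p q P Q h1 h2 => by
    rw [abs_mul]; exact mul_le_mul h1 h2 (abs_nonneg _) ((abs_nonneg _).trans h1)
  have hs1 : ∀ i, Summable fun x => ρ x * u x * g x i := fun i => by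
    simp only [mul_assoc]
    exact hsm ρ _ hρs (fun x => (hρ x).le) ⟨M * K, fun x => hb _ _ _ _ (hM x) (hK x i)⟩
  have hs2 : ∀ i, Summable fun x => ρ (x + unitv d i) * u (x + unitv d i) * g x i := fun i => by
    simp only [mul_assoc]
    exact hsm _ _ (hsh i ρ hρs) (fun x => (hρ _).le) ⟨M * K, fun x => hb _ _ _ _ (hM _) (hK x i)⟩
  have hparts := summation_by_parts (fun x => ρ x * u x) g hs1 hs2
  have hsD : Summable fun x => ∑ i, dgrad (fun x => ρ x * u x) x i * g x i := by
    refine summable_sum fun i _ => ?_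
    simp only [dgrad, sub_mul]
    exact (hs2 i).sub (hs1 i)
  have hpt : ∀ x, -(δ * ∑ i, ρ (x + unitv d i) * u (x + unitv d i) ^ 2)
      ≤ ∑ i, dgrad (fun x => ρ x * u x) x i * g x i := fun x => by
    have e1 : ∑ i, dgrad (fun x => ρ x * u x) x i * g x i = ρ x * ∑ i, dgrad u x i * g x i
        + ∑ i, (ρ (x + unitv d i) - ρ x) * (u (x + unitv d i) * g x i) := by
      rw [Finset.mul_sum, ← Finset.sum_add_distrib]
      exact Finset.sum_congr rfl fun i _ => by simp only [dgrad]; ring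
    have e2 : -(δ * ∑ i, ρ (x + unitv d i) * u (x + unitv d i) ^ 2)
        - ρ x * (δ / 2 * ∑ i, g x i ^ 2)
        ≤ ∑ i, (ρ (x + unitv d i) - ρ x) * (u (x + unitv d i) * g x i) := by
      rw [Finset.mul_sum, Finset.mul_sum, Finset.mul_sum, ← Finset.sum_neg_distrib,
        ← Finset.sum_sub_distrib]
      refine Finset.sum_le_sum fun i _ => ?_
      obtain ⟨q1, q2⟩ := hρδ x i
      have hp := hρ x
      have hp' := hρ (x + unitv d i)
      generalize ρ (x + unitv d i) = s at *
      generalize ρ x = t at *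
      generalize u (x + unitv d i) = v
      generalize g x i = h
      have c1 : |s - t| ≤ δ * t := by
        rw [abs_le]; constructor <;> nlinarith
      have c2 : |v * h| ≤ v ^ 2 / 2 + h ^ 2 / 2 := by
        rw [abs_le]; constructor <;> nlinarith [sq_nonneg (v + h), sq_nonneg (v - h)]
      have c3 := (abs_le.1 (hb _ _ _ _ c1 c2)).1
      have c4 : t * v ^ 2 ≤ 2 * s * v ^ 2 :=
        mul_le_mul_of_nonneg_right (by nlinarith) (sq_nonneg v)
      nlinarith [mul_le_mul_of_nonneg_left c4 hδ.le]
    have e3 : 0 ≤ ∑ i, dgrad u x i * g x i - δ / 2 * ∑ i, g x i ^ 2 := by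
      have h1 := (a.2 x).1 (dgrad u x)
      have h2 := hgn x
      have h3 : 0 ≤ ∑ i, dgrad u x i ^ 2 := Finset.sum_nonneg fun i _ => sq_nonneg _
      change lam * _ ≤ ∑ i, dgrad u x i * g x i at h1
      nlinarith
    have := mul_nonneg (hρ x).le e3
    rw [e1]; linarith
  have hshift : ∀ i, HasSum (fun x => ρ (x + unitv d i) * u (x + unitv d i) ^ 2)
      (∑' x, ρ x * u x ^ 2) := fun i =>
    (Equiv.addRight (unitv d i)).hasSum_iff.2 hsq.hasSum
  have hlow : HasSum (fun x => -(δ * ∑ i, ρ (x + unitv d i) * u (x + unitv d i) ^ 2))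
      (-(δ * ∑ _i : Fin d, ∑' x, ρ x * u x ^ 2)) :=
    ((hasSum_sum fun i _ => hshift i).mul_left δ).neg
  have hle := hasSum_le hpt hlow hsD.hasSum
  have hzero : 0 = 1 / T * (∑' x, ρ x * u x ^ 2)
      + ∑' x, ∑ i, dgrad (fun x => ρ x * u x) x i * g x i := by
    have H : HasSum (fun x => 1 / T * (ρ x * u x ^ 2) + ρ x * u x * ddiv g x)
        (1 / T * (∑' x, ρ x * u x ^ 2) + ∑' x, ∑ i, dgrad (fun x => ρ x * u x) x i * g x i) :=
      (hsq.hasSum.mul_left (1 / T)).add hparts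
    have hz : (fun x => 1 / T * (ρ x * u x ^ 2) + ρ x * u x * ddiv g x) = fun _ => 0 := by
      ext x
      have h0 : 1 / T * u x + ddiv g x = 0 := congrFun hu x
      linear_combination ρ x * u x * h0
    rw [hz] at H
    exact hasSum_zero.unique H
  simp only [Finset.sum_const, Finset.card_univ, Fintype.card_fin, nsmul_eq_mul] at hle
  have hS0 : 0 ≤ ∑' x, ρ x * u x ^ 2 :=
    tsum_nonneg fun x => mul_nonneg (hρ x).le (sq_nonneg _)
  have hS : ∑' x, ρ x * u x ^ 2 = 0 := by
    by_contra hne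
    have hpos := lt_of_le_of_ne hS0 (Ne.symm hne)
    have := mul_pos (sub_pos.2 hδT) hpos
    nlinarith
  ext x
  have h1 := hsq.le_tsum x fun y _ => mul_nonneg (hρ y).le (sq_nonneg _)
  rw [hS] at h1
  have h2 : u x ^ 2 ≤ 0 := by
    by_contra hc
    exact absurd h1 (not_le.2 (mul_pos (hρ x) (not_le.1 hc)))
  exact pow_eq_zero_iff two_ne_zero |>.1 (le_antisymm h2 (sq_nonneg _))

/-! ### Energy estimate -/

lemma summable_mul_of_sq {ι : Type*} {f g : ι → ℝ} (hf : Summable fun x => f x ^ 2)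
    (hg : Summable fun x => g x ^ 2) : Summable fun x => f x * g x := by
  refine Summable.of_norm_bounded (hf.add hg) fun x => ?_
  rw [Real.norm_eq_abs, abs_le]
  constructor <;> nlinarith [sq_nonneg (f x + g x), sq_nonneg (f x - g x)]

lemma summable_sq_add {ι : Type*} {f g : ι → ℝ} (hf : Summable fun x => f x ^ 2)
    (hg : Summable fun x => g x ^ 2) : Summable fun x => (f x + g x) ^ 2 := by
  convert (hf.add ((summable_mul_of_sq hf hg).mul_left 2)).add hg using 2 with x
  ring

set_option maxHeartbeats 1000000 in
/-- If the right-hand side is minus the divergence of the field `p δ_x`, the energy identity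
bounds the gradient of the `ℓ²` solution at `x`. -/
lemma energy_bound {d : ℕ} {lam T : ℝ} (hlam : 0 < lam) (hT : 0 < T) (b : Coeff d lam)
    (w : Lat d → ℝ) (hw : Summable fun z => w z ^ 2) (x : Lat d) (p : Fin d → ℝ)
    (hL : ∀ y, massiveOp T b.1 w y = -ddiv (fun z => if z = x then p else 0) y) :
    lam * vnorm (dgrad w x) ≤ vnorm p := by
  set g : Lat d → Fin d → ℝ := fun y => mulVec' (b.1 y) (dgrad w y) with hg
  set h : Lat d → Fin d → ℝ := fun z => if z = x then p else 0 with hh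
  have hsh : ∀ i : Fin d, Summable fun z => w (z + unitv d i) ^ 2 :=
    fun i => (Equiv.addRight (unitv d i)).summable_iff.2 hw
  have hDs : ∀ i : Fin d, Summable fun z => dgrad w z i ^ 2 := fun i => by
    have := summable_sq_add (hsh i) (g := fun z => -w z) (by simpa using hw)
    simpa [dgrad, sub_eq_add_neg] using this
  have hDS : Summable fun z => ∑ i, dgrad w z i ^ 2 := summable_sum fun i _ => hDs i
  have hgs : ∀ i : Fin d, Summable fun z => g z i ^ 2 := fun i => by
    refine Summable.of_nonneg_of_le (fun z => sq_nonneg _) (fun z => ?_) hDS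
    calc g z i ^ 2 = |g z i| ^ 2 := (sq_abs _).symm
      _ ≤ vnorm (dgrad w z) ^ 2 :=
        pow_le_pow_left₀ (abs_nonneg _) ((abs_le_vnorm _ i).trans ((b.2 z).2 _)) 2
      _ = _ := vnorm_sq _
  have hhs : ∀ i : Fin d, Summable fun z => h z i ^ 2 := fun i =>
    summable_of_ne_finset_zero (s := {x}) fun z hz => by
      simp [hh, Finset.mem_singleton.not.1 hz]
  have P1 := summation_by_parts w g (fun i => summable_mul_of_sq hw (hgs i))
    (fun i => summable_mul_of_sq (hsh i) (hgs i))
  have P2 := summation_by_parts w h (fun i => summable_mul_of_sq hw (hhs i))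
    (fun i => summable_mul_of_sq (hsh i) (hhs i))
  have hE : 1 / T * (∑' z, w z ^ 2) + ∑' z, ∑ i, dgrad w z i * g z i
      = -∑' z, ∑ i, dgrad w z i * h z i := by
    have H : HasSum (fun z => 1 / T * w z ^ 2 + w z * ddiv g z)
        (1 / T * (∑' z, w z ^ 2) + ∑' z, ∑ i, dgrad w z i * g z i) :=
      (hw.hasSum.mul_left (1 / T)).add P1
    have hz : (fun z => 1 / T * w z ^ 2 + w z * ddiv g z) = fun z => -(w z * ddiv h z) := by
      ext z
      have h0 : 1 / T * w z + ddiv g z = -ddiv h z := hL z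
      linear_combination w z * h0
    rw [hz] at H
    exact H.unique P2.neg
  have hR : ∑' z, ∑ i, dgrad w z i * h z i = ∑ i, dgrad w x i * p i := by
    rw [tsum_eq_single x fun z hz => by simp [hh, hz]]
    simp [hh]
  have hgS : Summable fun z => ∑ i, dgrad w z i * g z i :=
    summable_sum fun i _ => summable_mul_of_sq (hDs i) (hgs i)
  have hell : ∀ z, lam * ∑ i, dgrad w z i ^ 2 ≤ ∑ i, dgrad w z i * g z i :=
    fun z => (b.2 z).1 _
  have h1 : lam * ∑ i, dgrad w x i ^ 2 ≤ ∑' z, ∑ i, dgrad w z i * g z i :=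
    (hell x).trans (hgS.le_tsum x fun z _ => le_trans
      (mul_nonneg hlam.le (Finset.sum_nonneg fun i _ => sq_nonneg _)) (hell z))
  have h2 : 0 ≤ 1 / T * ∑' z, w z ^ 2 := mul_nonneg (by positivity) (tsum_nonneg fun z => sq_nonneg _)
  have h3 := (abs_le.1 (abs_dot_le (dgrad w x) p)).1
  rw [← vnorm_sq] at h1
  rw [hR] at hE
  have h4 : lam * vnorm (dgrad w x) ^ 2 ≤ vnorm (dgrad w x) * vnorm p := by linarith
  rcases eq_or_lt_of_le (vnorm_nonneg (dgrad w x)) with h0 | h0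
  · rw [← h0, mul_zero]; exact vnorm_nonneg _
  · refine le_of_mul_le_mul_left ?_ h0
    linarith [h4, sq (vnorm (dgrad w x))]

/-! ### Perturbing the coefficients at one site -/

/-- The difference of the correctors of two fields solves the equation of the first field, driven
by the flux defect of the second corrector. -/
lemma corrector_diff {d : ℕ} {T : ℝ} {ξ : Fin d → ℝ} {a b : Lat d → Fin d → Fin d → ℝ}
    {φ ψ : Lat d → ℝ} (hφ : IsModCorrector d T ξ a φ) (hψ : IsModCorrector d T ξ b ψ)
    (x : Lat d) (hab : ∀ y, y ≠ x → b y = a y) (y : Lat d) :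
    massiveOp T a (ψ - φ) y = -ddiv (fun z => if z = x then
      mulVec' (b x) (dgrad ψ x + ξ) - mulVec' (a x) (dgrad ψ x + ξ) else 0) y := by
  have h0 : (fun z => if z = x then
      mulVec' (b x) (dgrad ψ x + ξ) - mulVec' (a x) (dgrad ψ x + ξ) else 0)
      = fun z => mulVec' (b z) (dgrad ψ z + ξ) - mulVec' (a z) (dgrad ψ z + ξ) := by
    ext1 z
    split_ifs with hz
    · rw [hz]
    · rw [hab z hz, sub_self]
  have h1 := hφ.2 y
  have h2 := hψ.2 y
  have h3 := massiveOp_apply T a φ y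
  have h4 := massiveOp_apply T a ψ y
  rw [h0, map_sub, Pi.sub_apply, h3, h4, h1]
  simp only [mulVec'_add, ddiv, Pi.sub_apply, Pi.add_apply, Finset.sum_sub_distrib,
    Finset.sum_add_distrib] at h2 ⊢
  linarith

/-- The solution with right-hand side `-∇*(q δ_x)` in terms of the Green's function. -/
lemma green_combination {d : ℕ} {T : ℝ} {a : Lat d → Fin d → Fin d → ℝ} {G : Lat d → Lat d → ℝ}
    (hG : ∀ y, IsGreen d T a y fun z => G z y) (x : Lat d) (q : Fin d → ℝ) :
    Summable (fun z => (-∑ k, q k * (G z (x + unitv d k) - G z x)) ^ 2) ∧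
    ∀ y, massiveOp T a (fun z => -∑ k, q k * (G z (x + unitv d k) - G z x)) y
      = -ddiv (fun z => if z = x then q else 0) y := by
  constructor
  · have hterm : ∀ k, Summable fun z => (q k * (G z (x + unitv d k) - G z x)) ^ 2 := fun k => by
      have h1 := summable_sq_add (hG (x + unitv d k)).1 (g := fun z => -G z x)
        (by simpa using (hG x).1)
      simpa [mul_pow, sub_eq_add_neg] using h1.mul_left (q k ^ 2)
    simp only [neg_sq]
    have : ∀ s : Finset (Fin d), Summable fun z =>
        (∑ k ∈ s, q k * (G z (x + unitv d k) - G z x)) ^ 2 := fun s => by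
      classical
      induction s using Finset.induction_on with
      | empty => simp
      | insert k s hk ih =>
        simp only [Finset.sum_insert hk]
        exact summable_sq_add (hterm k) ih
    exact this _
  · intro y
    have hgr : ∀ p, massiveOp T a (fun z => G z p) y = if y = p then 1 else 0 :=
      fun p => (hG p).2 y
    have e : (fun z => -∑ k, q k * (G z (x + unitv d k) - G z x))
        = -∑ k, q k • ((fun z => G z (x + unitv d k)) - fun z => G z x) := by
      ext z; simp [Finset.sum_apply]
    rw [e, map_neg, map_sum, Pi.neg_apply, Finset.sum_apply, ddiv]
    congr 1
    refine Finset.sum_congr rfl fun k _ => ?_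
    rw [map_smul, map_sub, Pi.smul_apply, Pi.sub_apply, hgr, hgr, smul_eq_mul]
    simp only [sub_eq_iff_eq_add]
    split_ifs <;> simp

lemma bounded_of_summable_sq {ι : Type*} {f : ι → ℝ} (hf : Summable fun x => f x ^ 2) (x : ι) :
    |f x| ≤ Real.sqrt (∑' y, f y ^ 2) :=
  Real.abs_le_sqrt (hf.le_tsum x fun y _ => sq_nonneg _)

lemma vnorm_defect_le {d : ℕ} {lam : ℝ} (a b : Coeff d lam) (x : Lat d) (v : Fin d → ℝ) :
    vnorm (mulVec' (b.1 x) v - mulVec' (a.1 x) v) ≤ 2 * vnorm v := by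
  have h1 := vnorm_sub_le (mulVec' (b.1 x) v) (mulVec' (a.1 x) v)
  have h2 := (a.2 x).2 v
  have h3 := (b.2 x).2 v
  linarith

/-- Effect on the corrector gradient at the origin of changing the coefficients at `x` only. -/
lemma perturbation_bound {d : ℕ} {lam T : ℝ} (hlam : 0 < lam) (hT : 0 < T) {ξ : Fin d → ℝ}
    (a b : Coeff d lam) {φ ψ : Lat d → ℝ} (hφ : IsModCorrector d T ξ a.1 φ)
    (hψ : IsModCorrector d T ξ b.1 ψ) {G : Lat d → Lat d → ℝ}
    (hG : ∀ y, IsGreen d T a.1 y fun z => G z y) (x : Lat d)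
    (hab : ∀ y, y ≠ x → b.1 y = a.1 y) (j : Fin d) :
    |dgrad ψ 0 j - dgrad φ 0 j| ≤ 2 * (1 + 2 / lam) * specNorm (fun i k =>
        G (unitv d i) (x + unitv d k) - G (unitv d i) x - G 0 (x + unitv d k) + G 0 x)
      * vnorm (dgrad φ x + ξ) := by
  set q := mulVec' (b.1 x) (dgrad ψ x + ξ) - mulVec' (a.1 x) (dgrad ψ x + ξ) with hq
  set H : Fin d → Fin d → ℝ := fun i k =>
    G (unitv d i) (x + unitv d k) - G (unitv d i) x - G 0 (x + unitv d k) + G 0 x with hH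
  obtain ⟨hw2, hwL⟩ := green_combination hG x q
  set w : Lat d → ℝ := fun z => -∑ k, q k * (G z (x + unitv d k) - G z x) with hw
  have hdiff : ψ - φ = w := by
    obtain ⟨M₁, hM₁⟩ := hφ.1
    obtain ⟨M₂, hM₂⟩ := hψ.1
    refine sub_eq_zero.1 (bounded_unique hlam hT a _ (M₂ + M₁ + Real.sqrt (∑' y, w y ^ 2))
      (fun z => ?_) ?_)
    · exact (abs_sub _ _).trans (add_le_add ((abs_sub _ _).trans (add_le_add (hM₂ z) (hM₁ z)))
        (bounded_of_summable_sq hw2 z))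
    · ext y
      rw [map_sub, Pi.sub_apply, hwL, corrector_diff hφ hψ x hab, sub_self, Pi.zero_apply]
  have hgrad : ∀ z, dgrad w z = dgrad ψ z - dgrad φ z := fun z => by
    rw [← hdiff]; ext i; simp only [dgrad, Pi.sub_apply]; ring
  -- exchanging the two fields gives the equation of `b` driven by the corrector of `a`
  have henergy : lam * vnorm (dgrad w x) ≤ 2 * vnorm (dgrad φ x + ξ) := by
    refine (energy_bound hlam hT b w hw2 x
      (mulVec' (b.1 x) (dgrad φ x + ξ) - mulVec' (a.1 x) (dgrad φ x + ξ)) fun y => ?_).trans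
      (vnorm_defect_le a b x _)
    have h1 := corrector_diff hψ hφ x (fun y hy => (hab y hy).symm) y
    rw [← hdiff, ← neg_sub φ ψ, map_neg, Pi.neg_apply, h1]
    simp only [ddiv, ← Finset.sum_neg_distrib]
    refine Finset.sum_congr rfl fun i _ => ?_
    split_ifs <;> simp
  have hψx : vnorm (dgrad ψ x + ξ) ≤ (1 + 2 / lam) * vnorm (dgrad φ x + ξ) := by
    have h1 : dgrad ψ x + ξ = (dgrad φ x + ξ) + dgrad w x := by rw [hgrad]; abel
    have h2 : vnorm (dgrad w x) ≤ 2 / lam * vnorm (dgrad φ x + ξ) := by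
      rw [div_mul_eq_mul_div, le_div_iff₀ hlam]; linarith
    rw [h1]
    linarith [vnorm_add_le (dgrad φ x + ξ) (dgrad w x)]
  have hrep : dgrad ψ 0 j - dgrad φ 0 j = -mulVec' H q j := by
    have := congrFun (hgrad 0) j
    rw [Pi.sub_apply] at this
    rw [← this]
    simp only [dgrad, hw, mulVec', hH, zero_add]
    rw [neg_sub_neg, ← Finset.sum_sub_distrib, ← Finset.sum_neg_distrib]
    exact Finset.sum_congr rfl fun k _ => by ring
  rw [hrep, abs_neg]
  calc |mulVec' H q j| ≤ vnorm (mulVec' H q) := abs_le_vnorm _ j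
    _ ≤ specNorm H * vnorm q := vnorm_mulVec'_le _ _
    _ ≤ specNorm H * (2 * ((1 + 2 / lam) * vnorm (dgrad φ x + ξ))) :=
      mul_le_mul_of_nonneg_left ((vnorm_defect_le a b x _).trans (by linarith)) (specNorm_nonneg _)
    _ = _ := by ring

/-- Lemma 3, estimate on `osc (∇φ_T + ξ)`: the oscillation of the
gradient of the modified corrector is controlled by the mixed second derivative of the
Green's function (in spectral norm) and the gradient of the corrector. -/
theorem statement7 (d : ℕ) (hd : 2 ≤ d) (lam : ℝ) (hlam0 : 0 < lam) (hlam1 : lam ≤ 1) :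
    ∃ C : ℝ, 0 < C ∧
      ∀ T : ℝ, 0 < T → ∀ ξ : Fin d → ℝ,
      ∀ φT : Coeff d lam → Lat d → ℝ,
        (∀ a : Coeff d lam, IsModCorrector d T ξ a.1 (φT a)) →
      ∀ G : Coeff d lam → Lat d → Lat d → ℝ,
        (∀ (a : Coeff d lam) (y : Lat d), IsGreen d T a.1 y (fun x => G a x y)) →
      ∀ (a : Coeff d lam) (x : Lat d) (j : Fin d),
        osc (fun b => dgrad (φT b) 0 j + ξ j) a x
          ≤ C * specNorm (fun i k =>
                G a (unitv d i) (x + unitv d k) - G a (unitv d i) x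
                  - G a 0 (x + unitv d k) + G a 0 x)
              * vnorm (fun i => dgrad (φT a) x i + ξ i) := by
  refine ⟨4 * (1 + 2 / lam), by positivity, ?_⟩
  intro T hT ξ φT hφ G hG a x j
  set S := specNorm (fun i k => G a (unitv d i) (x + unitv d k) - G a (unitv d i) x
                  - G a 0 (x + unitv d k) + G a 0 x) with hS
  have hv : (fun i => dgrad (φT a) x i + ξ i) = dgrad (φT a) x + ξ := rfl
  rw [hv]
  have key : ∀ b ∈ sameOutside a x, |dgrad (φT b) 0 j - dgrad (φT a) 0 j|
      ≤ 2 * (1 + 2 / lam) * S * vnorm (dgrad (φT a) x + ξ) := fun b hb =>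
    perturbation_bound hlam0 hT a b (hφ a) (hφ b) (hG a) x hb j
  have hne : ((fun b => dgrad (φT b) 0 j + ξ j) '' sameOutside a x).Nonempty :=
    ⟨_, a, fun _ _ => rfl, rfl⟩
  have hsup : sSup ((fun b => dgrad (φT b) 0 j + ξ j) '' sameOutside a x)
      ≤ dgrad (φT a) 0 j + ξ j + 2 * (1 + 2 / lam) * S * vnorm (dgrad (φT a) x + ξ) := by
    refine csSup_le hne ?_
    rintro _ ⟨b, hb, rfl⟩
    linarith [(abs_le.1 (key b hb)).2]
  have hinf : dgrad (φT a) 0 j + ξ j - 2 * (1 + 2 / lam) * S * vnorm (dgrad (φT a) x + ξ)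
      ≤ sInf ((fun b => dgrad (φT b) 0 j + ξ j) '' sameOutside a x) := by
    refine le_csInf hne ?_
    rintro _ ⟨b, hb, rfl⟩
    linarith [(abs_le.1 (key b hb)).1]
  unfold osc
  linarith
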